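/- There is a universal constant C > 0 such that for every finite set D of n disks in the plane in general position and every integer k ≥ 1, the number of points p ∈ ℝ² that lie on the boundary circles of two distinct disks of D and satisfy depth_D(p) ≤ k is at most C·n·k. -/

import Mathlib

open Metric Set
open scoped Classical

noncomputable section

abbrev Plane : Type := EuclideanSpace ℝ (Fin 2)

/-- A disk is a closed ball of positive radius in the plane. -/
def IsDisk (d : Set Plane) : Prop :=
  ∃ (c : Plane) (r : ℝ), 0 < r ∧ d = Metric.closedBall c r

/-- The depth of a point `p` in a finite family `D` of disks:
the number of disks of `D` containing `p`. -/
def diskDepth (D : Finset (Set Plane)) (p : Plane) : ℕ :=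
  {d : Set Plane | d ∈ D ∧ p ∈ d}.ncard

/-- General position: no two boundary circles are tangent (meet in exactly one
point), and no three boundary circles pass through a common point.  (All disks
are automatically distinct, since `D` is a finite set of point sets.) -/
def GeneralPosition (D : Finset (Set Plane)) : Prop :=
  (∀ d₁ ∈ D, ∀ d₂ ∈ D, d₁ ≠ d₂ → ¬ ∃ p : Plane, frontier d₁ ∩ frontier d₂ = {p}) ∧
  (∀ d₁ ∈ D, ∀ d₂ ∈ D, ∀ d₃ ∈ D, d₁ ≠ d₂ → d₁ ≠ d₃ → d₂ ≠ d₃ →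
      frontier d₁ ∩ frontier d₂ ∩ frontier d₃ = ∅)

/-- The intersection graph of a finite family of disks: two distinct disks are
adjacent iff they intersect. -/
def IG (D : Finset (Set Plane)) : SimpleGraph {d // d ∈ D} :=
  SimpleGraph.fromRel (fun d₁ d₂ => (d₁.1 ∩ d₂.1).Nonempty)

/-- The ε-safe zone for disks `D` and attack set `B`: the set of points `p`
with `depth_{D∖B}(p) ≥ ε·depth_D(p)`. -/
def SafeZone (ε : ℝ) (D B : Finset (Set Plane)) : Set Plane :=
  {p | ε * (diskDepth D p : ℝ) ≤
        (({d : Set Plane | d ∈ D ∧ d ∉ B ∧ p ∈ d}).ncard : ℝ)}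

/-- Two points are ε-safely connected if they lie in the same topological
connected component of the ε-safe zone. -/
def SafelyConnected (ε : ℝ) (D B : Finset (Set Plane)) (p q : Plane) : Prop :=
  q ∈ connectedComponentIn (SafeZone ε D B) p

def ConsPair {ι : Type*} (b : ι → ℝ) (B : Set ι) (e : ι × ι) : Prop :=
  e.1 ∈ B ∧ e.2 ∈ B ∧ b e.1 < b e.2 ∧ ∀ k ∈ B, ¬ (b e.1 < b k ∧ b k < b e.2)

lemma ConsPair.eq_of_fst {ι : Type*} {b : ι → ℝ} {B : Set ι} (hb : InjOn b B) {e f : ι × ι}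
    (he : ConsPair b B e) (hf : ConsPair b B f) (h : e.1 = f.1) : e = f := by
  obtain ⟨e1, e2⟩ := e
  obtain ⟨f1, f2⟩ := f
  simp only at h
  subst h
  obtain ⟨h1, h2, h3, h4⟩ := he
  obtain ⟨g1, g2, g3, g4⟩ := hf
  simp only at *
  have : b e2 = b f2 := by
    rcases lt_trichotomy (b e2) (b f2) with h | h | h
    · exact absurd ⟨h3, h⟩ (g4 _ h2)
    · exact h
    · exact absurd ⟨g3, h⟩ (h4 _ g2)
  rw [hb h2 g2 this]

lemma ConsPair.eq_of_snd {ι : Type*} {b : ι → ℝ} {B : Set ι} (hb : InjOn b B) {e f : ι × ι}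
    (he : ConsPair b B e) (hf : ConsPair b B f) (h : e.2 = f.2) : e = f := by
  obtain ⟨e1, e2⟩ := e
  obtain ⟨f1, f2⟩ := f
  simp only at h
  subst h
  obtain ⟨h1, h2, h3, h4⟩ := he
  obtain ⟨g1, g2, g3, g4⟩ := hf
  simp only at *
  have : b e1 = b f1 := by
    rcases lt_trichotomy (b e1) (b f1) with h | h | h
    · exact absurd ⟨h, g3⟩ (h4 _ g1)
    · exact h
    · exact absurd ⟨h, h3⟩ (g4 _ h1)
  rw [hb h1 g1 this]

lemma ConsPair.eq_of_mid {ι : Type*} {b : ι → ℝ} {B : Set ι} (hb : InjOn b B) {e f : ι × ι}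
    (he : ConsPair b B e) (hf : ConsPair b B f) (k : ι)
    (h1 : b e.1 < b k) (h2 : b k < b e.2) (h3 : b f.1 < b k) (h4 : b k < b f.2) : e = f := by
  apply ConsPair.eq_of_fst hb he hf
  apply hb he.1 hf.1
  rcases lt_trichotomy (b e.1) (b f.1) with h | h | h
  · exact absurd ⟨h, h3.trans h2⟩ (he.2.2.2 _ hf.1)
  · exact h
  · exact absurd ⟨h, h1.trans h4⟩ (hf.2.2.2 _ he.1)

/-- the four ways a pair is charged to an element -/
def Charge {ι : Type*} (b : ι → ℝ) (T : Finset ℝ) (A : ℝ → Set ι) (e : ι × ι)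
    (x : ι × Fin 4) : Prop :=
  (x.2 = 0 ∧ ∃ l ∈ T, (∀ u ∈ T, u ≤ l) ∧ ConsPair b (A l) e ∧ x.1 = e.1) ∨
  (∃ l ∈ T, ∃ l' ∈ T, l < l' ∧ (∀ u ∈ T, l < u → l' ≤ u) ∧ ConsPair b (A l) e ∧
    ((x.2 = 1 ∧ x.1 = e.1 ∧ x.1 ∉ A l') ∨ (x.2 = 2 ∧ x.1 = e.2 ∧ x.1 ∉ A l') ∨
     (x.2 = 3 ∧ x.1 ∈ A l' ∧ b e.1 < b x.1 ∧ b x.1 < b e.2)))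

lemma Charge.inj {ι : Type*} {b : ι → ℝ} {T : Finset ℝ} {A : ℝ → Set ι}
    (hconv : ∀ i s u v, s ≤ u → u ≤ v → i ∈ A s → i ∈ A v → i ∈ A u)
    (hinj : ∀ s, InjOn b (A s)) {e f : ι × ι} {x : ι × Fin 4}
    (he : Charge b T A e x) (hf : Charge b T A f x) : e = f := by
  obtain ⟨x, n⟩ := x
  rcases he with ⟨hn, l, hl, hmax, hc, hx⟩ | ⟨l, hl, l', hl', hll, hnext, hc, h⟩
  · rcases hf with ⟨hn', m, hm, hmax', hc', hx'⟩ | ⟨m, hm, m', hm', hmm, hnext', hc', h'⟩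
    · have : l = m := le_antisymm (hmax' _ hl) (hmax _ hm)
      subst this
      exact hc.eq_of_fst (hinj l) hc' (hx.symm.trans hx')
    · simp only at hn
      subst hn
      simp at h'
  · rcases hf with ⟨hn', m, hm, hmax', hc', hx'⟩ | ⟨m, hm, m', hm', hmm, hnext', hc', h'⟩
    · simp only at hn'
      subst hn'
      simp at h
    · simp only at h h'
      have key : ∀ l l' m m' : ℝ, l < l' → (∀ u ∈ T, l < u → l' ≤ u) → m ∈ T → x ∈ A l →
          x ∉ A l' → x ∈ A m → m ≤ l := by
        intro l l' m m' h1 h2 h3 h4 h5 h6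
        by_contra hlt
        exact h5 (hconv x l l' m h1.le (h2 _ h3 (not_le.1 hlt)) h4 h6)
      have key2 : ∀ l l' m' : ℝ, l < l' → (∀ u ∈ T, l < u → l' ≤ u) → m' ∈ T → x ∉ A l →
          x ∈ A l' → x ∈ A m' → l' ≤ m' := by
        intro l l' m' h1 h2 h3 h4 h5 h6
        by_contra hlt
        push Not at hlt
        have : m' ≤ l := by
          by_contra hh
          exact absurd (h2 _ h3 (not_le.1 hh)) (not_le.2 hlt)
        exact h4 (hconv x m' l l' this h1.le h6 h5)
      rcases h with ⟨hn, hx, hx2⟩ | ⟨hn, hx, hx2⟩ | ⟨hn, hx, hx2, hx3⟩ <;> subst hn <;>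
        simp at h'
      · obtain ⟨hy, hy2⟩ := h'
        have hxl : x ∈ A l := hx ▸ hc.1
        have hxm : x ∈ A m := hy ▸ hc'.1
        have : l = m := le_antisymm (key m m' l l' hmm hnext' hl hxm hy2 hxl)
          (key l l' m m' hll hnext hm hxl hx2 hxm)
        subst this
        exact hc.eq_of_fst (hinj l) hc' (hx.symm.trans hy)
      · obtain ⟨hy, hy2⟩ := h'
        have hxl : x ∈ A l := hx ▸ hc.2.1
        have hxm : x ∈ A m := hy ▸ hc'.2.1
        have : l = m := le_antisymm (key m m' l l' hmm hnext' hl hxm hy2 hxl)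
          (key l l' m m' hll hnext hm hxl hx2 hxm)
        subst this
        exact hc.eq_of_snd (hinj l) hc' (hx.symm.trans hy)
      · obtain ⟨hy, hy2, hy3⟩ := h'
        have hxl : x ∉ A l := fun h => hc.2.2.2 x h ⟨hx2, hx3⟩
        have hxm : x ∉ A m := fun h => hc'.2.2.2 x h ⟨hy2, hy3⟩
        have h1 : l' = m' := le_antisymm (key2 l l' m' hll hnext hm' hxl hx hy)
          (key2 m m' l' hmm hnext' hl' hxm hy hx)
        subst h1
        have : l = m := by
          rcases lt_trichotomy l m with h | h | h
          · exact absurd (hnext m hm h) (not_le.2 hmm)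
          · exact h
          · exact absurd (hnext' l hl h) (not_le.2 hll)
        subst this
        exact hc.eq_of_mid (hinj l) hc' x hx2 hx3 hy2 hy3

lemma comb_bound {ι : Type*} (S : Finset ι) (b : ι → ℝ) (T : Finset ℝ) (A : ℝ → Set ι)
    (hAS : ∀ s, A s ⊆ (S : Set ι))
    (hconv : ∀ i s u v, s ≤ u → u ≤ v → i ∈ A s → i ∈ A v → i ∈ A u)
    (hinj : ∀ s, InjOn b (A s)) (E : Finset (ι × ι))
    (hE : ∀ e ∈ E, ∃ s ∈ T, ConsPair b (A s) e) : E.card ≤ 4 * S.card := by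
  have hex : ∀ e ∈ E, ∃ x ∈ S ×ˢ (Finset.univ : Finset (Fin 4)), Charge b T A e x := by
    intro e he
    obtain ⟨s, hs, hcs⟩ := hE e he
    obtain ⟨l, hl, hmax⟩ := Finset.exists_max_image (T.filter fun s => ConsPair b (A s) e) id
      ⟨s, by simp [hs, hcs]⟩
    simp only [Finset.mem_filter, id] at hl hmax
    obtain ⟨hl, hc⟩ := hl
    have h1S : e.1 ∈ S := hAS _ hc.1
    have h2S : e.2 ∈ S := hAS _ hc.2.1
    by_cases hlast : ∀ u ∈ T, u ≤ l
    · exact ⟨(e.1, 0), by simp [h1S], Or.inl ⟨rfl, l, hl, hlast, hc, rfl⟩⟩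
    · push Not at hlast
      obtain ⟨u, hu, hlu⟩ := hlast
      obtain ⟨l', hl', hmin⟩ := Finset.exists_min_image (T.filter fun s => l < s) id
        ⟨u, by simp [hu, hlu]⟩
      simp only [Finset.mem_filter, id] at hl' hmin
      obtain ⟨hl', hll⟩ := hl'
      have hnext : ∀ u ∈ T, l < u → l' ≤ u := fun u h1 h2 => hmin u ⟨h1, h2⟩
      have hnc : ¬ ConsPair b (A l') e := fun h => absurd (hmax l' ⟨hl', h⟩) (not_le.2 hll)
      by_cases h1 : e.1 ∈ A l'
      · by_cases h2 : e.2 ∈ A l'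
        · have : ∃ k ∈ A l', b e.1 < b k ∧ b k < b e.2 := by
            by_contra hno
            push Not at hno
            exact hnc ⟨h1, h2, hc.2.2.1, fun k hk hh => absurd (hno k hk hh.1) (not_le.2 hh.2)⟩
          obtain ⟨k, hk, hk1, hk2⟩ := this
          exact ⟨(k, 3), by simpa using hAS _ hk, Or.inr ⟨l, hl, l', hl', hll, hnext, hc,
            Or.inr (Or.inr ⟨rfl, hk, hk1, hk2⟩)⟩⟩
        · exact ⟨(e.2, 2), by simp [h2S], Or.inr ⟨l, hl, l', hl', hll, hnext, hc,
            Or.inr (Or.inl ⟨rfl, rfl, h2⟩)⟩⟩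
      · exact ⟨(e.1, 1), by simp [h1S], Or.inr ⟨l, hl, l', hl', hll, hnext, hc,
            Or.inl ⟨rfl, rfl, h1⟩⟩⟩
  rcases E.eq_empty_or_nonempty with h0 | ⟨e0, -⟩
  · simp [h0]
  have : Nonempty (ι × Fin 4) := ⟨(e0.1, 0)⟩
  choose! F hF1 hF2 using hex
  have := Finset.card_le_card_of_injOn (s := E) F hF1 (by
    intro e he f hf hef
    have h1 := hF2 e he
    have h2 := hF2 f hf
    rw [← hef] at h2
    exact Charge.inj hconv hinj h1 h2)
  rw [Finset.card_product] at this
  simp at this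
  omega

lemma envelope_bound {ι : Type*} (S : Finset ι) (a b c : ι → ℝ)
    (hab : ∀ i ∈ S, ∀ j ∈ S, b i = b j → a i = a j)
    (habc : ∀ i ∈ S, ∀ j ∈ S, b i = b j → c i = c j → i = j)
    (E : Finset (ι × ι))
    (hE : ∀ e ∈ E, e.1 ∈ S ∧ e.2 ∈ S ∧ b e.1 < b e.2 ∧ ∃ s t : ℝ,
      a e.1 * s + b e.1 * t + c e.1 = a e.2 * s + b e.2 * t + c e.2 ∧
      ∀ k ∈ S, k ≠ e.1 → k ≠ e.2 → a e.1 * s + b e.1 * t + c e.1 < a k * s + b k * t + c k) :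
    E.card ≤ 4 * S.card := by
  have hE' : ∀ e ∈ E, ∃ s, ∃ t : ℝ,
      a e.1 * s + b e.1 * t + c e.1 = a e.2 * s + b e.2 * t + c e.2 ∧
      ∀ k ∈ S, k ≠ e.1 → k ≠ e.2 →
        a e.1 * s + b e.1 * t + c e.1 < a k * s + b k * t + c k :=
    fun e he => (hE e he).2.2.2
  choose! σ hσ using hE'
  refine comb_bound S b (E.image σ) (fun s => {i | i ∈ S ∧ ∃ t : ℝ, ∀ k ∈ S,
    a i * s + b i * t + c i ≤ a k * s + b k * t + c k}) (fun s i hi => hi.1) ?_ ?_ E ?_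
  · rintro i s u v hsu huv ⟨hi, t, ht⟩ ⟨-, t', ht'⟩
    refine ⟨hi, ?_⟩
    rcases eq_or_lt_of_le (hsu.trans huv) with h | h
    · have : u = s := by linarith
      subst this
      exact ⟨t, ht⟩
    · set w := (u - s) / (v - s) with hw
      have hw0 : 0 ≤ w := div_nonneg (by linarith) (by linarith)
      have hw1 : w ≤ 1 := by rw [hw, div_le_one (by linarith)]; linarith
      have hu : u = (1 - w) * s + w * v := by
        have : w * (v - s) = u - s := by rw [hw]; field_simp [(by linarith : v - s ≠ 0)]
        linarith
      refine ⟨(1 - w) * t + w * t', fun k hk => ?_⟩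
      have h1 := mul_le_mul_of_nonneg_left (ht k hk) (by linarith : 0 ≤ 1 - w)
      have h2 := mul_le_mul_of_nonneg_left (ht' k hk) hw0
      rw [hu]
      linarith
  · rintro s i ⟨hi, t, ht⟩ j ⟨hj, t', ht'⟩ hb
    have ha := hab i hi j hj hb
    apply habc i hi j hj hb
    have h1 := ht j hj
    have h2 := ht' i hi
    rw [hb, ha] at h1 h2
    linarith
  · intro e he
    obtain ⟨h1, h2, h3, -⟩ := hE e he
    obtain ⟨t, ht, hs⟩ := hσ e he
    refine ⟨σ e, Finset.mem_image_of_mem _ he, ⟨h1, t, ?_⟩, ⟨h2, t, ?_⟩, h3, ?_⟩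
    · intro k hk
      by_cases hk1 : k = e.1
      · rw [hk1]
      by_cases hk2 : k = e.2
      · rw [hk2, ht]
      exact (hs k hk hk1 hk2).le
    · intro k hk
      rw [← ht]
      by_cases hk1 : k = e.1
      · rw [hk1]
      by_cases hk2 : k = e.2
      · rw [hk2, ht]
      exact (hs k hk hk1 hk2).le
    · rintro k ⟨hk, t', ht'⟩ ⟨hb1, hb2⟩
      have hlt := hs k hk (by rintro rfl; exact lt_irrefl _ hb1)
        (by rintro rfl; exact lt_irrefl _ hb2)
      have q1 := ht' _ h1
      have q2 := ht' _ h2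
      rcases le_total t t' with h | h
      · nlinarith [mul_nonneg (sub_nonneg.2 hb1.le) (sub_nonneg.2 h)]
      · nlinarith [mul_nonneg (sub_nonneg.2 hb2.le) (sub_nonneg.2 h)]

lemma sample_sum {α : Type*} (D X Y : Finset α) (hX : X ⊆ D) (hY : Y ⊆ D)
    (hXY : Disjoint X Y) (q : ℝ) :
    ∑ S ∈ D.powerset, (if X ⊆ S ∧ Disjoint Y S then q ^ S.card * (1 - q) ^ (D \ S).card else 0)
      = q ^ X.card * (1 - q) ^ Y.card := by
  have h := Finset.prod_add (fun i => if i ∈ Y then (0:ℝ) else q)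
    (fun i => if i ∈ X then (0:ℝ) else 1 - q) D
  have h2 : ∏ i ∈ D, ((if i ∈ Y then (0:ℝ) else q) + (if i ∈ X then (0:ℝ) else 1 - q))
      = q ^ X.card * (1 - q) ^ Y.card := by
    have : ∀ i ∈ D, ((if i ∈ Y then (0:ℝ) else q) + (if i ∈ X then (0:ℝ) else 1 - q))
        = (if i ∈ X then q else 1) * (if i ∈ Y then 1 - q else 1) := by
      intro i _
      by_cases h1 : i ∈ X
      · have : i ∉ Y := Finset.disjoint_left.1 hXY h1
        simp [h1, this]
      · by_cases h2 : i ∈ Y <;> simp [h1, h2]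
    rw [Finset.prod_congr rfl this, Finset.prod_mul_distrib, Finset.prod_ite_mem,
      Finset.prod_ite_mem, Finset.inter_eq_right.2 hX, Finset.inter_eq_right.2 hY]
    simp
  rw [← h2, h]
  refine Finset.sum_congr rfl fun S hS => ?_
  have hS := Finset.mem_powerset.1 hS
  split_ifs with hc
  · obtain ⟨hc1, hc2⟩ := hc
    rw [Finset.prod_congr rfl (g := fun _ => q), Finset.prod_congr (s₁ := D \ S) rfl
      (g := fun _ => 1 - q)]
    · simp
    · intro i hi
      rw [if_neg]
      intro h
      exact (Finset.mem_sdiff.1 hi).2 (hc1 h)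
    · intro i hi
      rw [if_neg]
      intro h
      exact Finset.disjoint_left.1 hc2 h hi
  · symm
    by_cases h1 : X ⊆ S
    · have : ¬ Disjoint Y S := fun h => hc ⟨h1, h⟩
      obtain ⟨i, hi1, hi2⟩ := Finset.not_disjoint_iff.1 this
      rw [Finset.prod_eq_zero hi2 (by simp [hi1]), zero_mul]
    · obtain ⟨i, hi1, hi2⟩ := Finset.not_subset.1 h1
      rw [Finset.prod_eq_zero (s := D \ S) (i := i) (by simp [hi2, hX hi1]) (by simp [hi1]),
        mul_zero]

lemma union_bound (S : Finset (Set Plane)) (c : Set Plane → Plane) (r : Set Plane → ℝ)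
    (hr : ∀ d ∈ S, 0 < r d) (hd : ∀ d ∈ S, d = Metric.closedBall (c d) (r d))
    (V : Finset Plane)
    (hV : ∀ p ∈ V, ∃ d₁ ∈ S, ∃ d₂ ∈ S, d₁ ≠ d₂ ∧ p ∈ frontier d₁ ∧ p ∈ frontier d₂ ∧
      ∀ d ∈ S, d ≠ d₁ → d ≠ d₂ → p ∉ d) : V.card ≤ 8 * S.card := by
  have hfr : ∀ d ∈ S, ∀ p, p ∈ frontier d ↔ dist p (c d) = r d := by
    intro d hdS p
    conv_lhs => rw [hd d hdS]
    rw [frontier_closedBall _ (hr d hdS).ne', mem_sphere]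
  have hmem : ∀ d ∈ S, ∀ p, p ∈ d ↔ dist p (c d) ≤ r d := by
    intro d hdS p
    conv_lhs => rw [hd d hdS]
    rw [mem_closedBall]
  obtain ⟨τ, hτ⟩ := Infinite.exists_notMem_finset ((S ×ˢ S).image fun e =>
    -((c e.1) 0 - (c e.2) 0) / ((c e.1) 1 - (c e.2) 1))
  have hgen : ∀ i ∈ S, ∀ j ∈ S, (c i) 0 + τ * (c i) 1 = (c j) 0 + τ * (c j) 1 → c i = c j := by
    intro i hi j hj h
    by_cases h1 : (c i) 1 = (c j) 1
    · ext n
      fin_cases n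
      · simp only [h1] at h
        simpa using h
      · exact h1
    · exfalso
      apply hτ
      refine Finset.mem_image.2 ⟨(i, j), by simp [hi, hj], ?_⟩
      have : (c i) 1 - (c j) 1 ≠ 0 := sub_ne_zero.2 h1
      field_simp
      linarith
  have hdist : ∀ p q : Plane, dist p q ^ 2 = (p 0 - q 0) ^ 2 + (p 1 - q 1) ^ 2 := by
    intro p q
    rw [EuclideanSpace.dist_eq, Real.sq_sqrt (by positivity)]
    simp [Fin.sum_univ_two, Real.dist_eq, sq_abs]
  set b : Set Plane → ℝ := fun d => -2 * ((c d) 0 + τ * (c d) 1) with hb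
  set a : Set Plane → ℝ := fun d => -2 * (c d) 1 with ha
  set g : Set Plane → ℝ := fun d => (c d) 0 ^ 2 + (c d) 1 ^ 2 - r d ^ 2 with hg
  have hbc : ∀ i ∈ S, ∀ j ∈ S, b i = b j → c i = c j := by
    intro i hi j hj h
    apply hgen i hi j hj
    simp only [hb] at h
    linarith
  have hpow : ∀ d, ∀ p : Plane, a d * (p 1 - τ * p 0) + b d * p 0 + g d
      = dist p (c d) ^ 2 - r d ^ 2 - (p 0 ^ 2 + p 1 ^ 2) := by
    intro d p
    rw [hdist]
    simp only [ha, hb, hg]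
    ring
  have hcr : ∀ i ∈ S, ∀ j ∈ S, c i = c j → r i = r j → i = j := by
    intro i hi j hj h1 h2
    rw [hd i hi, hd j hj, h1, h2]
  have hV' : ∀ p ∈ V, ∃ e : Set Plane × Set Plane, e.1 ∈ S ∧ e.2 ∈ S ∧ b e.1 < b e.2 ∧
      p ∈ frontier e.1 ∧ p ∈ frontier e.2 ∧ ∀ d ∈ S, d ≠ e.1 → d ≠ e.2 → p ∉ d := by
    intro p hp
    obtain ⟨d₁, h1, d₂, h2, hne, hp1, hp2, hoth⟩ := hV p hp
    rcases lt_trichotomy (b d₁) (b d₂) with h | h | h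
    · exact ⟨(d₁, d₂), h1, h2, h, hp1, hp2, hoth⟩
    · exfalso
      have hc := hbc _ h1 _ h2 h
      apply hne
      apply hcr _ h1 _ h2 hc
      rw [← (hfr _ h1 p).1 hp1, ← (hfr _ h2 p).1 hp2, hc]
    · exact ⟨(d₂, d₁), h2, h1, h, hp2, hp1, fun d h h' h'' => hoth d h h'' h'⟩
  choose! f hf1 hf2 hf3 hf4 hf5 hf6 using hV'
  have hE : (V.image f).card ≤ 4 * S.card := by
    apply envelope_bound S a b g
    · intro i hi j hj h
      simp only [ha, hbc i hi j hj h]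
    · intro i hi j hj h h'
      have hc := hbc i hi j hj h
      apply hcr i hi j hj hc
      simp only [hg, hc] at h'
      have : r i ^ 2 = r j ^ 2 := by linarith
      exact (pow_left_inj₀ (hr i hi).le (hr j hj).le two_ne_zero).1 this
    · intro e he
      obtain ⟨p, hp, rfl⟩ := Finset.mem_image.1 he
      refine ⟨hf1 p hp, hf2 p hp, hf3 p hp, p 1 - τ * p 0, p 0, ?_, ?_⟩
      · rw [hpow, hpow, (hfr _ (hf1 p hp) p).1 (hf4 p hp), (hfr _ (hf2 p hp) p).1 (hf5 p hp)]
        ring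
      · intro k hk hk1 hk2
        rw [hpow, hpow, (hfr _ (hf1 p hp) p).1 (hf4 p hp)]
        have := hf6 p hp k hk hk1 hk2
        rw [hmem k hk, not_le] at this
        have := pow_lt_pow_left₀ this (hr k hk).le two_ne_zero
        linarith
  have h2 : V.card ≤ 2 * (V.image f).card := by
    apply Finset.card_le_mul_card_image
    intro e he
    by_contra hlt
    push Not at hlt
    obtain ⟨x, hx, y, hy, z, hz, hxy, hxz, hyz⟩ := Finset.two_lt_card.1 hlt
    simp only [Finset.mem_filter] at hx hy hz
    obtain ⟨hx, rfl⟩ := hx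
    obtain ⟨hy, hye⟩ := hy
    obtain ⟨hz, hze⟩ := hz
    have hcne : c (f x).1 ≠ c (f x).2 := by
      intro h
      have := hf3 x hx
      simp only [hb, h] at this
      exact lt_irrefl _ this
    have e1 := (hfr _ (hf1 x hx) x).1 (hf4 x hx)
    have e2 := (hfr _ (hf2 x hx) x).1 (hf5 x hx)
    have e3 := (hfr _ (hf1 y hy) y).1 (hf4 y hy)
    have e4 := (hfr _ (hf2 y hy) y).1 (hf5 y hy)
    have e5 := (hfr _ (hf1 z hz) z).1 (hf4 z hz)
    have e6 := (hfr _ (hf2 z hz) z).1 (hf5 z hz)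
    rw [hye] at e3 e4
    rw [hze] at e5 e6
    rcases EuclideanGeometry.eq_of_dist_eq_of_dist_eq_of_finrank_eq_two
      (by simp) hcne hxy e1 e3 e5 e2 e4 e6 with h | h
    · exact hxz h.symm
    · exact hyz h.symm
  omega

lemma pow_third (k : ℕ) (hk : 1 ≤ k) : (1:ℝ) / 3 ≤ (1 - 1 / ((k:ℝ) + 1)) ^ k := by
  have hk0 : (0:ℝ) < k := by exact_mod_cast hk
  have h1 : (1 + 1 / (k:ℝ)) ^ k ≤ 3 := by
    have : 1 + 1 / (k:ℝ) ≤ Real.exp (1 / k) := by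
      linarith [Real.add_one_le_exp (1 / (k:ℝ))]
    calc (1 + 1 / (k:ℝ)) ^ k ≤ Real.exp (1 / k) ^ k := by gcongr
      _ = Real.exp 1 := by
        rw [← Real.exp_nat_mul]
        congr 1
        field_simp
      _ ≤ 3 := by linarith [Real.exp_one_lt_d9]
  have h2 : 1 - 1 / ((k:ℝ) + 1) = (1 + 1 / (k:ℝ))⁻¹ := by
    field_simp
    ring
  rw [h2, inv_pow, one_div]
  exact inv_anti₀ (by positivity) h1

/-- There is a universal constant `C > 0` such that for every
finite set `D` of `n` disks in general position and every integer `k ≥ 1`, the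
number of points lying on the boundary circles of two distinct disks of `D`
and having depth at most `k` is at most `C·n·k`. -/
theorem shallow_vertices_count :
    ∃ C : ℝ, 0 < C ∧
      ∀ (D : Finset (Set Plane)), (∀ d ∈ D, IsDisk d) → GeneralPosition D →
      ∀ k : ℕ, 1 ≤ k →
      (({p : Plane | ∃ d₁ ∈ D, ∃ d₂ ∈ D, d₁ ≠ d₂ ∧
          p ∈ frontier d₁ ∧ p ∈ frontier d₂ ∧ diskDepth D p ≤ k}).ncard : ℝ)
        ≤ C * D.card * k := by
  refine ⟨48, by norm_num, ?_⟩
  intro D hD _ k hk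
  set W := {p : Plane | ∃ d₁ ∈ D, ∃ d₂ ∈ D, d₁ ≠ d₂ ∧
          p ∈ frontier d₁ ∧ p ∈ frontier d₂ ∧ diskDepth D p ≤ k} with hW
  by_cases hfin : W.Finite
  swap
  · rw [Set.Infinite.ncard hfin]
    simp only [Nat.cast_zero]
    positivity
  rw [Set.ncard_eq_toFinset_card W hfin]
  set V := hfin.toFinset with hV
  have hD' : ∀ d ∈ D, ∃ c : Plane, ∃ r : ℝ, 0 < r ∧ d = Metric.closedBall c r := hD
  choose! c r hr hcr using hD'
  have hp : ∀ p ∈ V, ∃ d₁, ∃ d₂, d₁ ∈ D ∧ d₂ ∈ D ∧ d₁ ≠ d₂ ∧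
          p ∈ frontier d₁ ∧ p ∈ frontier d₂ ∧ diskDepth D p ≤ k := by
    intro p hp
    obtain ⟨d₁, h1, d₂, h2, h⟩ := hfin.mem_toFinset.1 hp
    exact ⟨d₁, d₂, h1, h2, h⟩
  choose! f₁ f₂ h1 h2 hne hf1 hf2 hdep using hp
  set X : Plane → Finset (Set Plane) := fun p => {f₁ p, f₂ p} with hX
  set Y : Plane → Finset (Set Plane) := fun p => (D.filter fun d => p ∈ d) \ X p with hY
  set q : ℝ := 1 / ((k:ℝ) + 1) with hq
  have hq0 : 0 < q := by positivity
  have hq1 : q ≤ 1 := by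
    rw [hq, div_le_one (by positivity)]
    linarith [(Nat.cast_nonneg k : (0:ℝ) ≤ k)]
  obtain ⟨w, hw⟩ : ∃ w : Finset (Set Plane) → ℝ,
      w = fun S => q ^ S.card * (1 - q) ^ (D \ S).card := ⟨_, rfl⟩
  have hw0 : ∀ S, 0 ≤ w S := by
    intro S
    rw [hw]
    exact mul_nonneg (pow_nonneg hq0.le _) (pow_nonneg (by linarith) _)
  have hsamp : ∀ X Y : Finset (Set Plane), X ⊆ D → Y ⊆ D → Disjoint X Y →
      ∑ S ∈ D.powerset, (if X ⊆ S ∧ Disjoint Y S then w S else 0)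
        = q ^ X.card * (1 - q) ^ Y.card := by
    intro X Y h1 h2 h3
    rw [hw]
    exact sample_sum D X Y h1 h2 h3 q
  have hYk : ∀ p ∈ V, (Y p).card ≤ k := by
    intro p hp
    refine le_trans (Finset.card_le_card Finset.sdiff_subset) (le_trans (le_of_eq ?_) (hdep p hp))
    rw [diskDepth, ← Set.ncard_coe_finset]
    congr 1
    ext d
    simp
  have hlow : (V.card : ℝ) * (q ^ 2 * (1 / 3)) ≤ ∑ p ∈ V, ∑ S ∈ D.powerset,
      (if X p ⊆ S ∧ Disjoint (Y p) S then w S else 0) := by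
    rw [← nsmul_eq_mul]
    apply Finset.card_nsmul_le_sum
    intro p hp
    rw [hsamp (X p) (Y p)]
    · have hc : (X p).card = 2 := Finset.card_pair (hne p hp)
      rw [hc]
      apply mul_le_mul_of_nonneg_left _ (by positivity)
      refine (pow_third k hk).trans ?_
      exact pow_le_pow_of_le_one (by linarith) (by linarith) (hYk p hp)
    · intro d hd
      simp only [hX, Finset.mem_insert, Finset.mem_singleton] at hd
      rcases hd with rfl | rfl
      · exact h1 p hp
      · exact h2 p hp
    · exact Finset.sdiff_subset.trans (Finset.filter_subset _ _)
    · exact Finset.disjoint_sdiff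
  have hup : ∑ p ∈ V, ∑ S ∈ D.powerset, (if X p ⊆ S ∧ Disjoint (Y p) S then w S else 0)
      ≤ 8 * (D.card * q) := by
    rw [Finset.sum_comm]
    have hs : ∀ S ∈ D.powerset, ∑ p ∈ V, (if X p ⊆ S ∧ Disjoint (Y p) S then w S else 0)
        ≤ ∑ d ∈ D, 8 * (if {d} ⊆ S ∧ Disjoint (∅ : Finset (Set Plane)) S then w S else 0) := by
      intro S hS
      have hS := Finset.mem_powerset.1 hS
      rw [← Finset.sum_filter, Finset.sum_const, nsmul_eq_mul, ← Finset.mul_sum,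
        ← Finset.sum_filter, Finset.sum_const, nsmul_eq_mul]
      have e1 : (D.filter fun d => {d} ⊆ S ∧ Disjoint (∅ : Finset (Set Plane)) S) = S := by
        ext d
        simp only [Finset.mem_filter, Finset.singleton_subset_iff, Finset.disjoint_empty_left,
          and_true]
        exact ⟨fun h => h.2, fun h => ⟨hS h, h⟩⟩
      rw [e1, ← mul_assoc]
      apply mul_le_mul_of_nonneg_right _ (hw0 S)
      have := union_bound S c r (fun d hd => hr d (hS hd)) (fun d hd => hcr d (hS hd))
        (V.filter fun p => X p ⊆ S ∧ Disjoint (Y p) S) (by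
          intro p hp
          simp only [Finset.mem_filter] at hp
          obtain ⟨hp, hXS, hYS⟩ := hp
          refine ⟨f₁ p, hXS (by simp [hX]), f₂ p, hXS (by simp [hX]), hne p hp, hf1 p hp,
            hf2 p hp, ?_⟩
          intro d hd hd1 hd2 hpd
          exact Finset.disjoint_left.1 hYS (by simp [hY, hX, hS hd, hpd, hd1, hd2]) hd)
      exact_mod_cast this
    refine (Finset.sum_le_sum hs).trans (le_of_eq ?_)
    rw [Finset.sum_comm]
    have : ∀ d ∈ D, ∑ S ∈ D.powerset,
        8 * (if {d} ⊆ S ∧ Disjoint (∅ : Finset (Set Plane)) S then w S else 0) = 8 * q := by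
      intro d hd
      rw [← Finset.mul_sum, hsamp {d} ∅ (by simpa using hd) (by simp) (by simp)]
      simp
    rw [Finset.sum_congr rfl this]
    simp
    ring
  have hfinal := hlow.trans hup
  have hk1 : (1:ℝ) ≤ k := by exact_mod_cast hk
  have hqk : q * ((k:ℝ) + 1) = 1 := by
    rw [hq]
    field_simp
  have h3 : (V.card : ℝ) * q ≤ 24 * D.card := by
    have : q * ((V.card : ℝ) * q) ≤ q * (24 * D.card) := by nlinarith
    exact le_of_mul_le_mul_left this hq0
  have h4 : (V.card : ℝ) ≤ 24 * D.card * (k + 1) := by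
    calc (V.card : ℝ) = V.card * (q * (k + 1)) := by rw [hqk, mul_one]
      _ = V.card * q * (k + 1) := by ring
      _ ≤ 24 * D.card * (k + 1) := by gcongr
  have : (0:ℝ) ≤ D.card := Nat.cast_nonneg _
  nlinarith
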